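/- The number of spanning trees of the prism graph Cay(D_n, b^{±1}, a) is τ(n) = n(T(n, 2) − 1), where T(n, x) is the Chebyshev polynomial of the first kind. -/

import Mathlib

open DihedralGroup Polynomial.Chebyshev

/-- The Cayley graph of a group with symmetric connection set `S`. -/
def cayleyGraph {G : Type*} [Group G] (S : Set G) : SimpleGraph G :=
  SimpleGraph.fromRel (fun x y => x⁻¹ * y ∈ S)

/-- The prism graph on `2n` vertices: the Cayley graph `Cay(D_n, {b, b⁻¹, a})`. -/
def prismGraph (n : ℕ) : SimpleGraph (DihedralGroup n) :=
  cayleyGraph {r 1, r (-1), sr 0}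

/-- The number of spanning trees of a graph. -/
noncomputable def numSpanningTrees {V : Type*} (G : SimpleGraph V) : ℕ :=
  Nat.card {H : G.Subgraph // H.IsSpanning ∧ H.coe.IsTree}


/-- symmetrised Cauchy–Binet -/
lemma cauchyBinet_sq {m E : Type*} [Fintype m] [DecidableEq m] [Fintype E] [DecidableEq E]
    (B : Matrix m E ℤ) :
    ((Fintype.card m).factorial : ℤ) * (B * B.transpose).det
      = ∑ f : m → E, (B.submatrix id f).det ^ 2 := by
  have h1 : (B * B.transpose).det
      = ∑ f : m → E, (∏ i, B i (f i)) * (B.submatrix id f).det := by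
    simp only [Matrix.det_apply', Matrix.mul_apply, Finset.prod_univ_sum, Finset.mul_sum,
      Fintype.piFinset_univ, Matrix.transpose_apply, Matrix.submatrix_apply, id]
    rw [Finset.sum_comm]
    refine Finset.sum_congr rfl fun f _ => Finset.sum_congr rfl fun σ _ => ?_
    rw [Finset.prod_mul_distrib]; ring
  have h2 : ∀ σ : Equiv.Perm m, (B * B.transpose).det
      = ∑ f : m → E, (Equiv.Perm.sign σ : ℤ) * (∏ i, B i (f (σ i))) * (B.submatrix id f).det := by
    intro σ
    rw [h1, ← Equiv.sum_comp (Equiv.arrowCongr σ⁻¹ (Equiv.refl E))]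
    refine Finset.sum_congr rfl fun f _ => ?_
    have : B.submatrix id ((Equiv.arrowCongr σ⁻¹ (Equiv.refl E)) f)
        = (B.submatrix id f).submatrix id σ := by
      ext i j; simp [Equiv.arrowCongr]; rfl
    rw [this, Matrix.det_permute']
    simp [Equiv.arrowCongr]
    have : ∏ i, B i (f ((Equiv.symm σ⁻¹) i)) = ∏ i, B i (f (σ i)) := rfl
    rw [this]; ring
  have h3 : ∑ σ : Equiv.Perm m, (B * B.transpose).det
      = ((Fintype.card m).factorial : ℤ) * (B * B.transpose).det := by
    simp [Fintype.card_perm]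
  rw [← h3, Finset.sum_congr rfl fun σ _ => h2 σ, Finset.sum_comm]
  refine Finset.sum_congr rfl fun f _ => ?_
  rw [← Finset.sum_mul, sq]
  congr 1
  rw [← Matrix.det_transpose, Matrix.det_apply']
  refine Finset.sum_congr rfl fun σ _ => ?_
  rfl

section mt
variable {V : Type*} [Fintype V] [DecidableEq V] (G : SimpleGraph V)

/-- signed incidence matrix -/
noncomputable def sinc (v : V) (e : Sym2 V) : ℤ :=
  (if v = (Quot.out e).1 then 1 else 0) - (if v = (Quot.out e).2 then 1 else 0)

/-- graph spanned by a family of edges -/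
def famGraph {R : Type*} (f : R → G.edgeSet) : SimpleGraph V :=
  SimpleGraph.fromEdgeSet (Set.range fun i => (f i : Sym2 V))

lemma out_mk (e : Sym2 V) : s((Quot.out e).1, (Quot.out e).2) = e := Quot.out_eq e

lemma sinc_cases (a b : V) :
    (∀ v, sinc v s(a,b) = (if v = a then 1 else 0) - (if v = b then 1 else 0)) ∨
    (∀ v, sinc v s(a,b) = (if v = b then 1 else 0) - (if v = a then 1 else 0)) := by
  have := out_mk s(a,b)
  rw [Sym2.eq_iff] at this
  rcases this with ⟨h1, h2⟩ | ⟨h1, h2⟩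
  · left; intro v; simp [sinc, h1, h2]
  · right; intro v; simp [sinc, h1, h2]

lemma famGraph_edgeSet {R : Type*} (f : R → G.edgeSet) :
    (famGraph G f).edgeSet = Set.range fun i => (f i : Sym2 V) := by
  rw [famGraph, SimpleGraph.edgeSet_fromEdgeSet, sdiff_eq_left]
  rw [Set.disjoint_left]
  rintro _ ⟨i, rfl⟩ h
  exact G.not_isDiag_of_mem_edgeSet (f i).2 h

lemma det_sq_of_connected (r : V) (f : {v // v ≠ r} → G.edgeSet)
    (h : (famGraph G f).Connected) :
    (Matrix.of fun (v : {v // v ≠ r}) (i : {v // v ≠ r}) => sinc (v : V) (f i : Sym2 V)).det ^ 2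
      = 1 := by
  set M := Matrix.of fun (v : {v // v ≠ r}) (i : {v // v ≠ r}) => sinc (v : V) (f i : Sym2 V)
    with hM
  have key : ∀ v : V, ∃ c : {v // v ≠ r} → ℤ,
      M.mulVec c = fun (w : {v // v ≠ r}) => if (w : V) = v then (1:ℤ) else 0 := by
    intro v
    obtain ⟨p⟩ := h.preconnected v r
    suffices hh : ∀ a b (p : (famGraph G f).Walk a b), b = r → ∃ c : {v // v ≠ r} → ℤ,
      M.mulVec c = fun (w : {v // v ≠ r}) => if (w : V) = a then (1:ℤ) else 0 from hh v r p rfl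
    intro a b p
    induction p with
    | nil => intro hb; exact ⟨0, by ext w; simp [hb, w.2]⟩
    | @cons a b c hab p ih =>
      intro hb
      obtain ⟨c, hc⟩ := ih hb
      have : s(a,b) ∈ (famGraph G f).edgeSet := hab
      rw [famGraph_edgeSet] at this
      obtain ⟨i, hi⟩ := this
      have hcol : M.mulVec (Pi.single i 1) = fun (w : {v // v ≠ r}) => sinc (w : V) s(a,b) := by
        ext w
        simp only [Matrix.mulVec_single_one, hM, Matrix.of_apply, Matrix.col_apply]
        rw [← hi]
      rcases sinc_cases a b with h' | h'
      · refine ⟨c + Pi.single i 1, ?_⟩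
        rw [Matrix.mulVec_add, hc, hcol]; ext w; simp [h']
      · refine ⟨c - Pi.single i 1, ?_⟩
        rw [Matrix.mulVec_sub, hc, hcol]; ext w; simp [h']
  choose c hc using key
  have hinv : M * (Matrix.of fun i (v : {v // v ≠ r}) => c v i) = 1 := by
    ext w v
    have := congrFun (hc v) w
    rw [Matrix.mul_apply, Matrix.one_apply]
    simp only [Matrix.mulVec, dotProduct] at this
    simp only [Matrix.of_apply, this, Subtype.ext_iff]
  have hd := congrArg Matrix.det hinv
  rw [Matrix.det_mul, Matrix.det_one] at hd
  rcases Int.isUnit_iff.mp (IsUnit.of_mul_eq_one _ hd) with h | h <;> rw [h] <;> norm_num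

lemma det_of_not_connected (r : V) (f : {v // v ≠ r} → G.edgeSet)
    (h : ¬ (famGraph G f).Connected) :
    (Matrix.of fun (v : {v // v ≠ r}) (i : {v // v ≠ r}) => sinc (v : V) (f i : Sym2 V)).det
      = 0 := by
  classical
  rw [← Matrix.exists_vecMul_eq_zero_iff]
  have : ∃ u, ¬ (famGraph G f).Reachable u r := by
    by_contra! hh
    exact h ((SimpleGraph.connected_iff _).2 ⟨fun a b => (hh a).trans (hh b).symm, ⟨r⟩⟩)
  obtain ⟨u, hu⟩ := this
  refine ⟨fun v => if (famGraph G f).Reachable u v then 1 else 0, ?_, ?_⟩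
  · intro h0
    have := congrFun h0 ⟨u, by rintro rfl; exact hu (SimpleGraph.Reachable.refl _)⟩
    simp at this
  · ext i
    simp only [Matrix.vecMul, dotProduct, Matrix.of_apply, Pi.zero_apply]
    have hs : ∑ v : V, (if (famGraph G f).Reachable u v then (1:ℤ) else 0) * sinc v (f i : Sym2 V) = 0 := by
      have hmem : (f i : Sym2 V) ∈ (famGraph G f).edgeSet := by
        rw [famGraph_edgeSet]; exact ⟨i, rfl⟩
      generalize (f i : Sym2 V) = e at hmem
      induction e using Sym2.ind with
      | _ a b =>
        have hab : (famGraph G f).Adj a b := hmem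
        have hr : (famGraph G f).Reachable u a ↔ (famGraph G f).Reachable u b :=
          ⟨fun h => h.trans hab.reachable, fun h => h.trans hab.symm.reachable⟩
        rcases sinc_cases a b with h' | h' <;>
          simp [h', mul_sub, Finset.sum_sub_distrib, hr]
    rw [← Fintype.sum_subtype_add_sum_subtype (p := fun v => v ≠ r)] at hs
    have h0 : ∑ v : {v // ¬ v ≠ r},
        (if (famGraph G f).Reachable u v then (1:ℤ) else 0) * sinc (v : V) (f i : Sym2 V) = 0 := by
      refine Finset.sum_eq_zero fun v _ => ?_
      have : (v : V) = r := not_not.1 v.2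
      rw [this, if_neg hu, zero_mul]
    rw [h0, add_zero] at hs
    exact hs

lemma card_fam (r : V) (T : SimpleGraph V) (hT : T ≤ G) (ht : T.IsTree) :
    Nat.card {f : {v // v ≠ r} → G.edgeSet // famGraph G f = T}
      = (Fintype.card {v // v ≠ r}).factorial := by
  classical
  have hc : Nat.card T.edgeSet = Fintype.card {v // v ≠ r} := by
    have := (SimpleGraph.isTree_iff_connected_and_card.1 ht).2
    rw [Nat.card_eq_fintype_card (α := V)] at this
    have h2 := Fintype.card_subtype_compl (fun v => v = r)
    have h3 : Fintype.card {v // v ≠ r} = Fintype.card V - 1 := by simp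
    rw [h3, ← this]; simp
  have hc' : Fintype.card {v // v ≠ r} = Fintype.card T.edgeSet := by
    rw [← hc, Nat.card_eq_fintype_card]
  rw [← Fintype.card_equiv (Fintype.equivOfCardEq hc'), ← Nat.card_eq_fintype_card]
  symm
  have hsub : T.edgeSet ⊆ G.edgeSet := SimpleGraph.edgeSet_mono hT
  refine Nat.card_congr (Equiv.ofBijective (fun e => ⟨fun i => ⟨e i, hsub (e i).2⟩, ?_⟩) ⟨?_, ?_⟩)
  · apply SimpleGraph.edgeSet_injective
    rw [famGraph_edgeSet]
    ext x
    constructor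
    · rintro ⟨i, rfl⟩; exact (e i).2
    · intro hx; exact ⟨e.symm ⟨x, hx⟩, by simp⟩
  · intro e e' h
    apply Equiv.ext
    intro i
    have := congrFun (congrArg Subtype.val h) i
    simpa [Subtype.ext_iff] using this
  · rintro ⟨f, hf⟩
    have hE := famGraph_edgeSet G f
    rw [hf] at hE
    let g : {v // v ≠ r} → T.edgeSet := fun i => ⟨f i, by rw [hE]; exact ⟨i, rfl⟩⟩
    have hg : Function.Surjective g := by
      rintro ⟨x, hx⟩
      have hx' := hx
      rw [hE] at hx'
      obtain ⟨i, hi⟩ := hx'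
      exact ⟨i, Subtype.ext hi⟩
    have hb : Function.Bijective g := (Fintype.bijective_iff_surjective_and_card g).2 ⟨hg, hc'⟩
    refine ⟨Equiv.ofBijective g hb, ?_⟩
    ext i; rfl

lemma numSpanningTrees_eq : numSpanningTrees G = Nat.card {T : SimpleGraph V // T ≤ G ∧ T.IsTree} := by
  refine Nat.card_congr
    { toFun := fun H => ⟨H.1.spanningCoe, H.1.spanningCoe_le, ?_⟩
      invFun := fun T => ⟨SimpleGraph.toSubgraph T.1 T.2.1, SimpleGraph.toSubgraph.isSpanning _ _, ?_⟩
      left_inv := ?_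
      right_inv := ?_ }
  · exact ((H.1.spanningCoeEquivCoeOfSpanning H.2.1).isTree_iff).2 H.2.2
  · exact (((SimpleGraph.toSubgraph T.1 T.2.1).spanningCoeEquivCoeOfSpanning
      (SimpleGraph.toSubgraph.isSpanning _ _)).isTree_iff).1 T.2.2
  · rintro ⟨H, h1, h2⟩
    apply Subtype.ext
    apply SimpleGraph.Subgraph.ext
    · exact (SimpleGraph.Subgraph.isSpanning_iff.1 h1).symm
    · rfl
  · rintro ⟨T, h⟩; rfl

lemma matrix_tree_B (r : V) [Fintype G.edgeSet] :
    (numSpanningTrees G : ℤ) =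
     ((Matrix.of fun (v : {v // v ≠ r}) (e : G.edgeSet) => sinc (v : V) (e : Sym2 V)) *
      (Matrix.of fun (v : {v // v ≠ r}) (e : G.edgeSet) => sinc (v : V) (e : Sym2 V)).transpose).det := by
  classical
  have h := cauchyBinet_sq
    (Matrix.of fun (v : {v // v ≠ r}) (e : G.edgeSet) => sinc (v : V) (e : Sym2 V))
  have hpos : ((Fintype.card {v // v ≠ r}).factorial : ℤ) ≠ 0 := by positivity
  apply mul_left_cancel₀ hpos
  rw [h]
  have h2 : ∀ f : {v // v ≠ r} → G.edgeSet,
      ((Matrix.of fun (v : {v // v ≠ r}) (e : G.edgeSet) => sinc (v : V) (e : Sym2 V)).submatrix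
        id f).det ^ 2 = if (famGraph G f).Connected then 1 else 0 := by
    intro f
    split_ifs with hc
    · exact det_sq_of_connected G r f hc
    · have := det_of_not_connected G r f hc
      rw [sq_eq_zero_iff]; exact this
  rw [Finset.sum_congr rfl fun f _ => h2 f]
  have h3 : ∀ f : {v // v ≠ r} → G.edgeSet, (famGraph G f).Connected →
      famGraph G f ≤ G ∧ (famGraph G f).IsTree := by
    intro f hc
    constructor
    · rw [← SimpleGraph.edgeSet_subset_edgeSet, famGraph_edgeSet]
      rintro _ ⟨i, rfl⟩; exact (f i).2
    · refine SimpleGraph.isTree_iff_connected_and_card.2 ⟨hc, le_antisymm ?_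
        hc.card_vert_le_card_edgeSet_add_one⟩
      have : Nat.card (famGraph G f).edgeSet ≤ Nat.card {v // v ≠ r} := by
        rw [famGraph_edgeSet]
        exact Finite.card_range_le _
      have h2 := Fintype.card_subtype_compl (fun v => v = r)
      have h4 : 0 < Fintype.card V := Fintype.card_pos_iff.2 ⟨r⟩
      simp at h2 this ⊢
      omega
  rw [Finset.sum_boole, numSpanningTrees_eq]
  have e : {f : {v // v ≠ r} → G.edgeSet // (famGraph G f).Connected} ≃
      Σ T : {T : SimpleGraph V // T ≤ G ∧ T.IsTree},
        {f : {v // v ≠ r} → G.edgeSet // famGraph G f = T.1} :=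
    { toFun := fun f => ⟨⟨famGraph G f.1, h3 f.1 f.2⟩, f.1, rfl⟩
      invFun := fun x => ⟨x.2.1, by rw [x.2.2]; exact x.1.2.2.connected⟩
      left_inv := fun f => rfl
      right_inv := by
        rintro ⟨⟨T, hT⟩, ⟨f, hf⟩⟩
        dsimp at hf
        subst hf; rfl }
  have h5 := Nat.card_congr e
  rw [Nat.card_sigma, Finset.sum_congr rfl fun T _ => card_fam G r T.1 T.2.1 T.2.2] at h5
  rw [Nat.card_eq_fintype_card, Fintype.card_subtype] at h5
  rw [h5]
  simp [mul_comm]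

lemma sinc_mul [Fintype G.edgeSet] [DecidableRel G.Adj] (u v : V) :
    ∑ e : G.edgeSet, sinc u (e : Sym2 V) * sinc v (e : Sym2 V) = G.lapMatrix ℤ u v := by
  classical
  have h0 : ∑ e : G.edgeSet, sinc u (e : Sym2 V) * sinc v (e : Sym2 V)
    = (if u = v then 1 else -1) * ∑ e : Sym2 V, G.incMatrix ℤ u e * G.incMatrix ℤ v e := by
    rw [Finset.mul_sum, ← Fintype.sum_subtype_add_sum_subtype (p := fun e => e ∈ G.edgeSet)
      (f := fun e => (if u = v then 1 else -1) * (G.incMatrix ℤ u e * G.incMatrix ℤ v e))]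
    have hz : ∑ i : {x // x ∉ G.edgeSet}, (if u = v then 1 else -1) *
        (G.incMatrix ℤ u i * G.incMatrix ℤ v i) = 0 := by
      refine Finset.sum_eq_zero fun e _ => ?_
      rw [G.incMatrix_of_notMem_incidenceSet (fun h => e.2 h.1)]; simp
    rw [hz, add_zero]
    refine Finset.sum_congr (by ext; simp) fun e _ => ?_
    obtain ⟨e, he⟩ := e
    induction e using Sym2.ind with
    | _ a b =>
      have hab : a ≠ b := G.ne_of_adj he
      simp only [SimpleGraph.incMatrix_apply', SimpleGraph.mk'_mem_incidenceSet_iff]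
      have : G.Adj a b := he
      rcases sinc_cases a b with h' | h' <;> simp only [h', this, true_and] <;>
        by_cases h1 : u = a <;> by_cases h2 : u = b <;> by_cases h3 : v = a <;> 
        by_cases h4 : v = b <;> by_cases h5 : u = v <;> simp_all
  rw [h0]
  have := congrFun (congrFun (G.incMatrix_mul_transpose (R := ℤ)) u) v
  rw [Matrix.mul_apply] at this
  simp only [Matrix.transpose_apply] at this
  rw [this]
  simp only [SimpleGraph.lapMatrix, SimpleGraph.degMatrix, Matrix.sub_apply, Matrix.diagonal_apply,
    Matrix.of_apply, SimpleGraph.adjMatrix_apply]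
  by_cases h : u = v
  · subst h; simp
  · by_cases h2 : G.Adj u v <;> simp [h, h2]

theorem matrix_tree (r : V) [DecidableRel G.Adj] :
    (numSpanningTrees G : ℤ) =
      ((G.lapMatrix ℤ).submatrix (Subtype.val : {v // v ≠ r} → V) Subtype.val).det := by
  classical
  rw [matrix_tree_B G r]
  congr 1
  ext u v
  rw [Matrix.mul_apply]
  simp only [Matrix.of_apply, Matrix.transpose_apply, Matrix.submatrix_apply]
  exact sinc_mul G u v
end mt

section linalg
open Polynomial

lemma det_rowsum {V R : Type*} [Fintype V] [DecidableEq V] [CommRing R] (L : Matrix V V R)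
    (h : ∀ j, ∑ i, L i j = 0) (x : R) (r : V) :
    (x • (1 : Matrix V V R) + L).det
      = x * ((x • (1 : Matrix V V R) + L).updateRow r (fun _ => 1)).det := by
  have h1 := Matrix.det_updateRow_sum (x • (1 : Matrix V V R) + L) r (fun _ => 1)
  rw [one_smul] at h1
  rw [← h1, ← Matrix.det_updateRow_smul]
  congr 2
  ext j
  have : (∑ k, (1 : R) • (x • (1 : Matrix V V R) + L) k) j
      = ∑ k, (x • (1 : Matrix V V R) + L) k j := by
    rw [Finset.sum_apply]; simp
  rw [this]
  simp only [Matrix.add_apply, Finset.sum_add_distrib, h, Matrix.smul_apply, Matrix.one_apply]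
  simp

lemma det_colsum {V R : Type*} [Fintype V] [DecidableEq V] [CommRing R] (L : Matrix V V R)
    (h : ∀ i, ∑ j, L i j = 0) (r : V) :
    (L.updateRow r (fun _ => 1)).det
      = Fintype.card V * (L.submatrix (Subtype.val : {v // v ≠ r} → V) Subtype.val).det := by
  have h1 := Matrix.det_updateCol_sum (L.updateRow r (fun _ => 1)) r (fun _ => 1)
  rw [one_smul] at h1
  rw [← h1, Matrix.twoBlockTriangular_det' _ (fun v => v ≠ r), mul_comm]
  · congr 1
    · have : Subsingleton {v // ¬ v ≠ r} :=
        ⟨fun a b => Subtype.ext ((not_not.1 a.2).trans (not_not.1 b.2).symm)⟩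
      rw [Matrix.det_eq_elem_of_subsingleton _ ⟨r, not_not.2 rfl⟩]
      simp [Matrix.toSquareBlockProp]
    · congr 1
      ext i j
      simp [Matrix.toSquareBlockProp, Matrix.updateRow_apply, i.2, j.2]
  · intro i hi j hj
    rw [not_not] at hj
    subst hj
    simp [Matrix.updateRow_apply, hi, h]

/-- cyclic shift -/
def shiftM (n : ℕ) (R : Type*) [CommRing R] : Matrix (ZMod n) (ZMod n) R :=
  Matrix.of fun i j => if i = j + 1 then 1 else 0

lemma shiftM_pow (n : ℕ) [NeZero n] (R : Type*) [CommRing R] (k : ℕ) (i j : ZMod n) :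
    (shiftM n R ^ k) i j = if i = j + k then 1 else 0 := by
  induction k generalizing j with
  | zero => simp [Matrix.one_apply]
  | succ k ih =>
    rw [pow_succ, Matrix.mul_apply]
    simp only [ih]
    simp [shiftM, add_assoc, add_comm (1 : ZMod n)]

lemma shiftM_mul (n : ℕ) [NeZero n] (R : Type*) [CommRing R] :
    shiftM n R * (shiftM n R).transpose = 1 := by
  ext i j
  rw [Matrix.mul_apply, Matrix.one_apply]
  simp only [shiftM, Matrix.of_apply, Matrix.transpose_apply]
  rw [Finset.sum_eq_single (i - 1)]
  · simp [eq_comm]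
  · intro b _ hb
    rw [if_neg, zero_mul]
    rintro rfl; simp at hb
  · simp

lemma shiftM_charpoly (n : ℕ) [NeZero n] : (shiftM n ℂ).charpoly = X ^ n - 1 := by
  set P := shiftM n ℂ with hP
  have hn : n ≠ 0 := NeZero.ne n
  have hmon : (X ^ n - 1 : ℂ[X]).Monic := monic_X_pow_sub_C 1 hn
  have hdeg : (X ^ n - 1 : ℂ[X]).degree = n := degree_X_pow_sub_C (Nat.pos_of_ne_zero hn) 1
  have hcd : P.charpoly.degree = n := by
    rw [Matrix.charpoly_degree_eq_dim, ZMod.card]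
  set d := P.charpoly - (X ^ n - 1) with hd
  have hlt : d.degree < n := by
    rw [← hcd]
    apply degree_sub_lt_left (by rw [hcd, hdeg]) P.charpoly_monic.ne_zero
    rw [P.charpoly_monic.leadingCoeff, hmon.leadingCoeff]
  have hPn : P ^ n = 1 := by
    ext i j
    rw [hP, shiftM_pow, Matrix.one_apply]; simp
  have hz : aeval P d = 0 := by
    rw [hd, map_sub, Matrix.aeval_self_charpoly]; simp [hPn]
  have : d = 0 := by
    by_contra h0
    have hnl : d.natDegree < n := (natDegree_lt_iff_degree_lt h0).2 hlt
    apply h0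
    ext m
    rw [coeff_zero]
    by_cases hm : m < n
    · rw [aeval_eq_sum_range' hnl] at hz
      have := congrFun (congrFun hz (m : ZMod n)) 0
      rw [Matrix.sum_apply, Finset.sum_eq_single m] at this
      · simpa [hP, shiftM_pow] using this
      · intro b hb hbm
        simp only [Matrix.smul_apply, hP, shiftM_pow, zero_add]
        rw [if_neg, smul_zero]
        intro he
        rw [ZMod.natCast_eq_natCast_iff', Nat.mod_eq_of_lt hm,
          Nat.mod_eq_of_lt (Finset.mem_range.1 hb)] at he
        exact hbm he.symm
      · intro h; exact absurd (Finset.mem_range.2 hm) h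
    · exact coeff_eq_zero_of_natDegree_lt (by omega)
  exact sub_eq_zero.1 this

lemma shiftM_det (n : ℕ) [NeZero n] (q : ℂ) : (q • 1 - shiftM n ℂ).det = q ^ n - 1 := by
  have := Matrix.eval_charpoly (shiftM n ℂ) q
  rw [shiftM_charpoly] at this
  simp at this
  rw [this]
  congr 2
  ext i j; simp [Matrix.one_apply, Matrix.diagonal_apply]

lemma cheb_q (q : ℂ) (hq : q ≠ 0) (n : ℕ) :
    2 * (T ℂ n).eval ((q + q⁻¹) / 2) = q ^ n + (q⁻¹) ^ n := by
  induction n using Nat.twoStepInduction with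
  | zero => simp; norm_num
  | one => simp; ring
  | more n h1 h2 =>
    push_cast at h2 ⊢
    rw [T_add_two]
    simp only [eval_sub, eval_mul, eval_X, eval_ofNat]
    have : q * q⁻¹ = 1 := mul_inv_cancel₀ hq
    linear_combination (q + q⁻¹) * h2 - h1 + (q ^ n + q⁻¹ ^ n) * this

lemma exists_q (y : ℂ) : ∃ q : ℂ, q ≠ 0 ∧ q + q⁻¹ = y := by
  obtain ⟨s, hs⟩ := IsAlgClosed.exists_pow_nat_eq (y ^ 2 - 4) (n := 2) (by norm_num)
  have h : ((y + s) / 2) * ((y - s) / 2) = 1 := by linear_combination (-1/4) * hs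
  refine ⟨(y + s) / 2, left_ne_zero_of_mul_eq_one h, ?_⟩
  rw [inv_eq_of_mul_eq_one_right h]; ring

lemma circ_det (n : ℕ) [NeZero n] (y : ℂ) :
    (y • 1 - shiftM n ℂ - (shiftM n ℂ).transpose).det = 2 * (T ℂ n).eval (y / 2) - 2 := by
  obtain ⟨q, hq, rfl⟩ := exists_q y
  have hqq : q * q⁻¹ = 1 := mul_inv_cancel₀ hq
  have hf : ((q + q⁻¹) • 1 - shiftM n ℂ - (shiftM n ℂ).transpose)
      = (q • 1 - shiftM n ℂ) * (q⁻¹ • (q • 1 - shiftM n ℂ).transpose) := by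
    simp only [Matrix.transpose_sub, Matrix.transpose_smul, Matrix.transpose_one, smul_sub,
      smul_smul, mul_sub, sub_mul, Matrix.mul_smul, Matrix.smul_mul, mul_one, one_mul,
      shiftM_mul, mul_comm q⁻¹ q, hqq, one_smul, add_smul]
    abel
  rw [hf, Matrix.det_mul, Matrix.det_smul, Matrix.det_transpose, shiftM_det, cheb_q q hq, ZMod.card]
  have h2 : q ^ n * q⁻¹ ^ n = 1 := by rw [← mul_pow, hqq, one_pow]
  linear_combination (q ^ n - 2) * h2

lemma block_det {m : Type*} [Fintype m] [DecidableEq m] (A B : Matrix m m ℂ) :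
    (Matrix.fromBlocks A B B A).det = (A + B).det * (A - B).det := by
  have h : Matrix.fromBlocks 1 0 (-1) 1 * Matrix.fromBlocks A B B A * Matrix.fromBlocks 1 0 1 1
      = Matrix.fromBlocks (A + B) B 0 (A - B) := by
    simp [Matrix.fromBlocks_multiply]
    abel
  have := congrArg Matrix.det h
  simpa [Matrix.det_mul, Matrix.det_fromBlocks_zero₁₂, Matrix.det_fromBlocks_zero₂₁] using this

end linalg

section prism

lemma ite_aux (p q : Prop) [Decidable p] [Decidable q] [Decidable (p ∨ q)] (h : ¬ (p ∧ q)) :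
    (-if p ∨ q then (1 : ℂ) else 0) = (-if p then 1 else 0) - if q then 1 else 0 := by
  by_cases hp : p <;> by_cases hq : q <;> simp_all

/-- indexing of the prism by two copies of the cycle -/
def dEquiv (n : ℕ) : DihedralGroup n ≃ ZMod n ⊕ ZMod n where
  toFun | r i => Sum.inl i | sr i => Sum.inr (-i)
  invFun | Sum.inl i => r i | Sum.inr i => sr (-i)
  left_inv := by rintro (i | i) <;> simp
  right_inv := by rintro (i | i) <;> simp

lemma prism_adj (n : ℕ) (x y : DihedralGroup n) (h : x ≠ y) :
    (prismGraph n).Adj x y ↔ x⁻¹ * y = r 1 ∨ x⁻¹ * y = r (-1) ∨ x⁻¹ * y = sr 0 := by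
  have h2 : y⁻¹ * x = (x⁻¹ * y)⁻¹ := by group
  simp only [prismGraph, cayleyGraph, SimpleGraph.fromRel_adj, h, h2, Set.mem_insert_iff,
    Set.mem_singleton_iff, inv_eq_iff_eq_inv, ne_eq, not_false_eq_true, true_and]
  simp
  tauto

lemma zmod_facts (n : ℕ) (hn : 3 ≤ n) : (1 : ZMod n) ≠ 0 ∧ (1 : ZMod n) ≠ -1 := by
  have : Fact (1 < n) := ⟨by omega⟩
  refine ⟨one_ne_zero, fun h => ?_⟩
  have h2 : ((2 : ℕ) : ZMod n) = 0 := by push_cast; linear_combination h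
  rw [ZMod.natCast_eq_zero_iff] at h2
  have := Nat.le_of_dvd (by norm_num) h2
  omega

open Classical in
lemma prism_degree (n : ℕ) [NeZero n] (hn : 3 ≤ n) (x : DihedralGroup n) :
    (prismGraph n).degree x = 3 := by
  obtain ⟨h1, h2⟩ := zmod_facts n hn
  have : (prismGraph n).neighborFinset x
      = ({r 1, r (-1), sr 0} : Finset (DihedralGroup n)).image (x * ·) := by
    ext y
    simp only [SimpleGraph.mem_neighborFinset, Finset.mem_image, Finset.mem_insert,
      Finset.mem_singleton]
    by_cases h : x = y
    · subst h
      have : ∀ s : DihedralGroup n, x * s = x ↔ s = r 0 := fun s => mul_eq_left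
      simp [this, -r_zero, h1, h1.symm]
    · rw [prism_adj n x y h]
      simp [inv_mul_eq_iff_eq_mul, eq_comm]
  rw [← SimpleGraph.card_neighborFinset_eq_degree, this,
    Finset.card_image_of_injective _ (mul_right_injective x)]
  rw [Finset.card_insert_of_notMem, Finset.card_insert_of_notMem, Finset.card_singleton]
  · simp
  · simp [h2]

open Classical in
lemma prism_lap (n : ℕ) [NeZero n] (hn : 3 ≤ n) :
    (prismGraph n).lapMatrix ℂ =
      (Matrix.fromBlocks ((3:ℂ) • 1 - shiftM n ℂ - (shiftM n ℂ).transpose) (-1) (-1)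
        ((3:ℂ) • 1 - shiftM n ℂ - (shiftM n ℂ).transpose)).submatrix (dEquiv n) (dEquiv n) := by
  obtain ⟨h1, h2⟩ := zmod_facts n hn
  ext x y
  by_cases h : x = y
  · subst h
    rcases x with i | i <;>
    simp [SimpleGraph.lapMatrix, SimpleGraph.degMatrix, prism_degree n hn, dEquiv, shiftM, h1]
  · have ha := prism_adj n x y h
    simp only [SimpleGraph.lapMatrix, SimpleGraph.degMatrix, Matrix.sub_apply,
      Matrix.diagonal_apply, h, if_false, SimpleGraph.adjMatrix_apply, ha]
    rcases x with i | i <;> rcases y with j | j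
    · have hij : i ≠ j := fun e => h (by rw [e])
      have e1 : -i + j = 1 ↔ j = i + 1 := ⟨fun h => by rw [← h]; ring, fun h => by rw [h]; ring⟩
      have e2 : -i + j = -1 ↔ i = j + 1 :=
        ⟨fun h => by linear_combination -h, fun h => by rw [h]; ring⟩
      have e3 : ¬ (i = j + 1 ∧ j = i + 1) := by
        rintro ⟨a, b⟩; apply h2; linear_combination -a - b
      simp [dEquiv, shiftM, hij, e1, e2]
      rw [ite_aux _ _ (fun hh => e3 ⟨hh.2, hh.1⟩)]
      ring
    · have e1 : j + i = 0 ↔ i = -j := ⟨fun h => by linear_combination h, fun h => by rw [h]; ring⟩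
      simp [dEquiv, Matrix.one_apply, e1]
    · have e1 : i + j = 0 ↔ -i = j := ⟨fun h => by linear_combination -h, fun h => by rw [← h]; ring⟩
      simp [dEquiv, Matrix.one_apply, e1]
    · have hij : i ≠ j := fun e => h (by rw [e])
      have e1 : j - i = 1 ↔ -i = -j + 1 := 
        ⟨fun h => by linear_combination h, fun h => by linear_combination h⟩
      have e2 : j - i = -1 ↔ -j = -i + 1 :=
        ⟨fun h => by linear_combination -h, fun h => by linear_combination -h⟩
      have e3 : ¬ (-i = -j + 1 ∧ -j = -i + 1) := by
        rintro ⟨a, b⟩; apply h2; linear_combination -a - b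
      simp [dEquiv, shiftM, hij, e1, e2]
      exact ite_aux _ _ e3

end prism

open Polynomial in
theorem prism_main (n : ℕ) (hn : 3 ≤ n) :
    (numSpanningTrees (prismGraph n) : ℤ) = n * ((T ℤ n).eval 2 - 1) := by
  classical
  have : NeZero n := ⟨by omega⟩
  set L := (prismGraph n).lapMatrix ℂ with hL
  have hrow : ∀ i, ∑ j, L i j = 0 := by
    intro i
    have := congrFun ((prismGraph n).lapMatrix_mulVec_const_eq_zero (R := ℂ)) i
    simpa [Matrix.mulVec, dotProduct] using this
  have hcol : ∀ j, ∑ i, L i j = 0 := by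
    intro j
    rw [← hrow j]
    refine Finset.sum_congr rfl fun i _ => ?_
    exact ((prismGraph n).isSymm_lapMatrix (R := ℂ)).apply j i
  have hdet : ∀ x : ℂ, (x • (1 : Matrix _ _ ℂ) + L).det =
      (2 * (T ℂ n).eval ((x + 2) / 2) - 2) * (2 * (T ℂ n).eval ((x + 4) / 2) - 2) := by
    intro x
    have : x • (1 : Matrix _ _ ℂ) + L =
      (Matrix.fromBlocks ((x + 3) • 1 - shiftM n ℂ - (shiftM n ℂ).transpose) (-1) (-1)
        ((x + 3) • 1 - shiftM n ℂ - (shiftM n ℂ).transpose)).submatrix (dEquiv n) (dEquiv n) := by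
      have h1 : (1 : Matrix (DihedralGroup n) (DihedralGroup n) ℂ) =
        (Matrix.fromBlocks 1 0 0 1).submatrix (dEquiv n) (dEquiv n) := by
        rw [Matrix.fromBlocks_one, Matrix.submatrix_one_equiv]
      rw [hL, prism_lap n hn, h1]
      ext a b
      simp only [Matrix.add_apply, Matrix.smul_apply, Matrix.submatrix_apply]
      rcases dEquiv n a with i | i <;> rcases dEquiv n b with j | j <;> simp <;> ring
    rw [this, Matrix.det_submatrix_equiv_self, block_det, ← circ_det, ← circ_det]
    congr 2
    · ext i j; by_cases hij : i = j <;> simp [hij] <;> ring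
    · ext i j; by_cases hij : i = j <;> simp [hij] <;> ring
  -- the polynomial identity
  let r0 : DihedralGroup n := r 0
  set P : ℂ[X] := (((X : ℂ[X]) • (1 : Matrix _ _ ℂ[X]) + L.map C).updateRow r0 (fun _ => 1)).det with hPdef
  set Q : ℂ[X] := 2 * (T ℂ n).comp (C (1/2) * X + 1) - 2 with hQ
  have hmap : ∀ x : ℂ, (evalRingHom x).mapMatrix ((X : ℂ[X]) • (1 : Matrix _ _ ℂ[X]) + L.map C)
      = x • (1 : Matrix _ _ ℂ) + L := by
    intro x
    ext i j
    by_cases hij : i = j <;> simp [hij]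
  have hP : X * P = Q * Q.comp (X + 2) := by
    rw [hPdef, ← det_rowsum]
    · apply Polynomial.funext
      intro x
      rw [← coe_evalRingHom, RingHom.map_det, hmap, hdet, hQ]
      simp
      have e1 : (x + 2) / 2 = 2⁻¹ * x + 1 := by ring
      have e2 : (x + 4) / 2 = 2⁻¹ * (x + 2) + 1 := by ring
      rw [e1, e2]
    · intro j
      simp only [Matrix.map_apply]
      rw [← map_sum, hcol, map_zero]
  have hP0 : P.eval 0 = (2 * n : ℂ) * numSpanningTrees (prismGraph n) := by
    have hm := hmap 0
    rw [zero_smul, zero_add] at hm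
    have h1 : (evalRingHom (0:ℂ)).mapMatrix
        (((X : ℂ[X]) • (1 : Matrix _ _ ℂ[X]) + L.map C).updateRow r0 (fun _ => 1))
        = L.updateRow r0 (fun _ => 1) := by
      rw [← hm]
      ext i j
      by_cases hij : i = r0 <;> simp [Matrix.updateRow_apply, hij]
    rw [hPdef, ← coe_evalRingHom, RingHom.map_det, h1, det_colsum L hrow]
    have h2 := congrArg (Int.cast : ℤ → ℂ) (matrix_tree (prismGraph n) r0)
    rw [Int.cast_det] at h2
    have h3 : (((prismGraph n).lapMatrix ℤ).submatrix (Subtype.val : {v // v ≠ r0} → _)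
      (Subtype.val : {v // v ≠ r0} → _)).map (Int.cast : ℤ → ℂ) = L.submatrix Subtype.val Subtype.val := by
      ext i j
      simp [hL, SimpleGraph.lapMatrix, SimpleGraph.degMatrix, Matrix.diagonal_apply,
        SimpleGraph.adjMatrix_apply]
    rw [← h3]
    have h4 : Fintype.card (DihedralGroup n) = 2 * n := DihedralGroup.card
    rw [h4]
    push_cast at h2 ⊢
    rw [h2]
  have hder := congrArg (fun p => (derivative p).eval 0) hP
  have hT' : (derivative (T ℂ n)).eval 1 = (n : ℂ) ^ 2 := by
    have := iterate_derivative_T_eval_one (R := ℂ) n 1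
    simpa using this
  have hT2 : (T ℂ n).eval 2 = (((T ℤ n).eval 2 : ℤ) : ℂ) := by
    rw [← map_T (Int.castRingHom ℂ)]
    have := Polynomial.eval_intCast_map (Int.castRingHom ℂ) (T ℤ n) 2
    simpa using this
  have e0 : (1 : ℂ) + 1 = 2 := by norm_num
  simp [hQ, derivative_comp, hP0, hT'] at hder
  rw [e0, hT2] at hder
  have hn0 : (n : ℂ) ≠ 0 := by exact_mod_cast (NeZero.ne n)
  have : (2 * n : ℂ) * (numSpanningTrees (prismGraph n))
    = (2 * n) * (n * ((((T ℤ n).eval 2 : ℤ) : ℂ) - 1)) := by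
    linear_combination hder
  have := mul_left_cancel₀ (mul_ne_zero two_ne_zero hn0) this
  exact_mod_cast this

theorem stmt18 (n : ℕ) (hn : 3 ≤ n) :
    (numSpanningTrees (prismGraph n) : ℤ) = n * ((T ℤ n).eval 2 - 1) := by
  exact prism_main n hn
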